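/- For all positive integers i, n, k with n − k > μ_i it holds that F_{n−k−2} ≤ W*_{i,n−k} < F_{n−k}, where W*_{i,n−k} = (−1)^k ( F_{n−1} W_{i,k} − F_n W_{i,k−1} ). In particular 0 < W*_{i,n−k} < F_n. -/

import Mathlib

open Real

noncomputable def phi : ℝ := (1 + Real.sqrt 5) / 2

noncomputable def W (i : ℕ) : ℕ → ℤ
  | 0 => ⌊phi ^ 2 * (⌊phi * i⌋ : ℝ)⌋ - ⌊phi * (⌊phi * i⌋ : ℝ)⌋
  | 1 => ⌊phi * (⌊phi * i⌋ : ℝ)⌋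
  | 2 => ⌊phi ^ 2 * (⌊phi * i⌋ : ℝ)⌋
  | (k + 3) => W i (k + 2) + W i (k + 1)

noncomputable def wplus (i : ℕ) : ℝ := phi⁻¹ ^ 2 * (W i 1 : ℝ) + phi⁻¹ * (W i 2 : ℝ)

noncomputable def wminus (i : ℕ) : ℝ := phi ^ 2 * (W i 1 : ℝ) - phi * (W i 2 : ℝ)

noncomputable def eta (i : ℕ) : ℝ := -(wplus i * wminus i)


noncomputable def mu (i : ℕ) : ℕ := sInf {m : ℕ | 0 < m ∧ 2 * W i 1 < (Nat.fib (m + 2) : ℤ)}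

noncomputable def Wstar (i n k : ℕ) : ℤ :=
  (-1) ^ k * ((Nat.fib (n - 1) : ℤ) * W i k - (Nat.fib n : ℤ) * W i (k - 1))


lemma phi_eq_aux : phi = Real.goldenRatio := rfl

lemma phi_sq_aux : phi ^ 2 = phi + 1 := by
  rw [phi_eq_aux]; exact Real.goldenRatio_sq

lemma phi_gt_aux : 1 < phi := by
  rw [phi_eq_aux]; exact Real.one_lt_goldenRatio

lemma W_vals_aux (i : ℕ) (hi : 0 < i) : ∃ a : ℤ, 1 ≤ a ∧ (a : ℝ) ≤ phi * i ∧ phi * i < a + 1 ∧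
    W i 0 = a ∧ W i 1 = a + i - 1 ∧ W i 2 = W i 1 + W i 0 := by
  have h1 := phi_gt_aux
  have h2 := phi_sq_aux
  have hi' : (1 : ℝ) ≤ i := by exact_mod_cast hi
  obtain ⟨a, ha⟩ : ∃ a : ℤ, a = ⌊phi * i⌋ := ⟨_, rfl⟩
  have hle : (a : ℝ) ≤ phi * i := by rw [ha]; exact Int.floor_le _
  have hlt : phi * i < a + 1 := by rw [ha]; exact Int.lt_floor_add_one _
  have hne : (a : ℝ) ≠ phi * i := by
    have : Irrational (phi * (i : ℝ)) := by
      rw [phi_eq_aux]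
      exact Real.goldenRatio_irrational.mul_natCast hi.ne'
    exact fun h => (this.ne_int a) h.symm
  have hlt2 : (a : ℝ) < phi * i := lt_of_le_of_ne hle hne
  have hb : ⌊phi * (a : ℝ)⌋ = a + i - 1 := by
    rw [Int.floor_eq_iff]
    push_cast
    constructor
    · nlinarith
    · nlinarith
  have hc : ⌊phi ^ 2 * (a : ℝ)⌋ = a + i - 1 + a := by
    rw [h2, add_mul, one_mul, Int.floor_add_intCast, hb]
  have w0 : W i 0 = a := by
    simp only [W]; rw [← ha, hb, hc]; ring
  have w1 : W i 1 = a + i - 1 := by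
    simp only [W]; rw [← ha, hb]
  have w2 : W i 2 = a + i - 1 + a := by
    simp only [W]; rw [← ha, hc]
  refine ⟨a, ?_, hle, hlt, w0, w1, by rw [w0, w1, w2]⟩
  rw [ha, Int.le_floor]; push_cast; nlinarith

lemma W_rec_aux (i : ℕ) (hi : 0 < i) (j : ℕ) : W i (j + 2) = W i (j + 1) + W i j := by
  rcases j with _ | j
  · obtain ⟨a, -, -, -, -, -, h⟩ := W_vals_aux i hi
    exact h
  · simp only [W]

lemma Wstar_aux (i : ℕ) (hi : 0 < i) (m j : ℕ) :
    Wstar i (m + (j + 1)) (j + 1) = (Nat.fib (m + 1) : ℤ) * W i 0 - Nat.fib m * W i 1 := by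
  induction j with
  | zero => simp [Wstar]
  | succ j ih =>
    rw [← ih]
    unfold Wstar
    have e1 : m + (j + 1 + 1) - 1 = m + j + 1 := by omega
    have e2 : m + (j + 1) - 1 = m + j := by omega
    have e3 : m + (j + 1 + 1) = m + j + 2 := by omega
    have e4 : m + (j + 1) = m + j + 1 := by omega
    rw [e1, e2, e3, e4, Nat.fib_add_two]
    simp only [Nat.add_sub_cancel]
    rw [W_rec_aux i hi j]
    push_cast
    ring

lemma cassini_aux (r : ℕ) : ∃ e : ℤ, (e = 1 ∨ e = -1) ∧
    (Nat.fib r : ℤ) * (Nat.fib r + Nat.fib (r + 1)) - (Nat.fib (r + 1) : ℤ) ^ 2 = e := by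
  induction r with
  | zero => exact ⟨-1, Or.inr rfl, by simp⟩
  | succ r ih =>
    obtain ⟨e, he, h⟩ := ih
    refine ⟨-e, by omega, ?_⟩
    rw [Nat.fib_add_two, ← h]
    push_cast
    ring

/-- The core: `a p < q i ≤ (a+1) p`. -/
lemma core_aux (p q a i e : ℤ) (hp : 1 ≤ p) (hq : p ≤ q) (ha : 1 ≤ a) (hi : 1 ≤ i)
    (he : e = 1 ∨ e = -1) (hc : p * (p + q) - q ^ 2 = e)
    (h1 : (a : ℝ) ≤ phi * i) (h2 : phi * i < a + 1) (hb : 2 * (a + i - 1) < p + q) :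
    a * p < q * i ∧ q * i ≤ (a + 1) * p := by
  have g1 := phi_gt_aux
  have g2 := phi_sq_aux
  have hp' : (1 : ℝ) ≤ p := by exact_mod_cast hp
  have hq' : (1 : ℝ) ≤ q := by exact_mod_cast hp.trans hq
  have hi' : (1 : ℝ) ≤ i := by exact_mod_cast hi
  constructor
  · by_contra! hcon
    have hconR : (q : ℝ) * i ≤ a * p := by exact_mod_cast hcon
    have k1 : (q : ℝ) ≤ phi * p := by
      have : (q : ℝ) * i ≤ (phi * p) * i := by nlinarith
      exact le_of_mul_le_mul_right this (by linarith)
    have k2 : phi * q ≤ p + q := by nlinarith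
    have k3R : (a : ℝ) * q ≤ i * (p + q) := by
      calc (a : ℝ) * q ≤ phi * i * q := by gcongr
        _ = i * (phi * q) := by ring
        _ ≤ _ := by gcongr
    have k3 : a * q ≤ i * (p + q) := by exact_mod_cast k3R
    obtain ⟨s, hs⟩ : ∃ s, s = a * p - q * i := ⟨_, rfl⟩
    obtain ⟨t, ht⟩ : ∃ t, t = i * (p + q) - a * q := ⟨_, rfl⟩
    have hs0 : 0 ≤ s := by linarith
    have ht0 : 0 ≤ t := by linarith
    have i1 : s * q + t * p = e * i := by rw [hs, ht, ← hc]; ring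
    have i2 : s * (p + q) + t * q = e * a := by rw [hs, ht, ← hc]; ring
    rcases he with rfl | rfl
    · have : 1 ≤ s + t := by
        by_contra! h0
        have z1 : s = 0 := by omega
        have z2 : t = 0 := by omega
        rw [z1, z2] at i1
        linarith
      nlinarith
    · nlinarith
  · by_contra! hcon
    have hconR : ((a : ℝ) + 1) * p < q * i := by exact_mod_cast hcon
    have k1 : phi * p < (q : ℝ) := by
      have : (phi * p) * i < (q : ℝ) * i := by nlinarith
      exact lt_of_mul_lt_mul_right this (by linarith)
    have k2 : p + q < phi * q := by nlinarith
    have k3R : (i : ℝ) * (p + q) < (a + 1) * q := by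
      calc (i : ℝ) * (p + q) < i * (phi * q) := by gcongr
        _ = phi * i * q := by ring
        _ ≤ _ := by gcongr
    have k3 : i * (p + q) < (a + 1) * q := by exact_mod_cast k3R
    obtain ⟨s, hs⟩ : ∃ s, s = q * i - (a + 1) * p := ⟨_, rfl⟩
    obtain ⟨t, ht⟩ : ∃ t, t = (a + 1) * q - i * (p + q) := ⟨_, rfl⟩
    have hs0 : 1 ≤ s := by linarith
    have ht0 : 1 ≤ t := by linarith
    have i1 : s * q + t * p = -e * i := by rw [hs, ht, ← hc]; ring
    rcases he with rfl | rfl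
    · nlinarith
    · nlinarith

/-- Bounds for the dual array: `F_{n−k−2} ≤ W*_{i,n−k} < F_{n−k}`,
in particular `0 < W*_{i,n−k} < F_n`. -/
theorem dual_array_bounds (i n k : ℕ) (hi : 0 < i) (hn : 0 < n) (hk : 0 < k)
    (h : (mu i : ℤ) < (n : ℤ) - (k : ℤ)) :
    ((Nat.fib (n - k - 2) : ℤ) ≤ Wstar i n k ∧ Wstar i n k < (Nat.fib (n - k) : ℤ)) ∧
      (0 < Wstar i n k ∧ Wstar i n k < (Nat.fib n : ℤ)) := by
  obtain ⟨a, ha, h1, h2, w0, w1, w2⟩ := W_vals_aux i hi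
  have hmem : mu i ∈ {m : ℕ | 0 < m ∧ 2 * W i 1 < (Nat.fib (m + 2) : ℤ)} := by
    apply Nat.sInf_mem
    refine ⟨(2 * W i 1).toNat + 5, by omega, ?_⟩
    have := Nat.le_fib_self (n := (2 * W i 1).toNat + 5 + 2) (by omega)
    omega
  obtain ⟨m0, hm⟩ := hmem
  have hmu2 : 2 ≤ mu i := by
    by_contra! hlt
    have : mu i = 1 := by omega
    rw [this, w1] at hm
    norm_num [Nat.fib_add_two] at hm
    omega
  obtain ⟨j, rfl⟩ : ∃ j, k = j + 1 := ⟨k - 1, by omega⟩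
  obtain ⟨r, rfl⟩ : ∃ r, n = (r + 2) + 1 + (j + 1) := ⟨n - (j + 1) - 3, by omega⟩
  have hmono : (Nat.fib (mu i + 2) : ℤ) ≤ Nat.fib (r + 2 + 2) := by
    exact_mod_cast Nat.fib_mono (by omega)
  have hW := Wstar_aux i hi (r + 2 + 1) j
  obtain ⟨e, he, hc⟩ := cassini_aux (r + 2)
  have hf4 : (Nat.fib (r + 2 + 2) : ℤ) = Nat.fib (r + 2) + Nat.fib (r + 2 + 1) := by
    rw [Nat.fib_add_two]; push_cast; ring
  have hf3 : (Nat.fib (r + 2 + 1) : ℤ) = Nat.fib (r + 1) + Nat.fib (r + 2) := by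
    rw [show r + 2 + 1 = (r + 1) + 2 by ring, Nat.fib_add_two]; push_cast; ring
  have hpos : (1 : ℤ) ≤ Nat.fib (r + 1) := by exact_mod_cast Nat.fib_pos.2 (by omega)
  have hpos2 : (1 : ℤ) ≤ Nat.fib (r + 2) := by exact_mod_cast Nat.fib_pos.2 (by omega)
  obtain ⟨c1, c2⟩ := core_aux (Nat.fib (r + 2)) (Nat.fib (r + 2 + 1)) a i e hpos2 (by omega) ha
    (by exact_mod_cast hi) he hc (by exact_mod_cast h1) (by exact_mod_cast h2)
    (by rw [← w1, ← hf4]; linarith)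
  have hle : (Nat.fib (r + 2 + 1) : ℤ) ≤ Nat.fib (r + 2 + 1 + (j + 1)) := by
    exact_mod_cast Nat.fib_mono (by omega)
  have s1 : r + 2 + 1 + (j + 1) - (j + 1) = r + 2 + 1 := by omega
  have s2 : r + 2 + 1 - 2 = r + 1 := by omega
  rw [s1, s2, hW, w0, w1, hf4]
  have lo : (Nat.fib (r + 1) : ℤ) ≤ ((Nat.fib (r + 2) : ℤ) + Nat.fib (r + 2 + 1)) * a
      - Nat.fib (r + 2 + 1) * (a + i - 1) := by linarith
  have up : ((Nat.fib (r + 2) : ℤ) + Nat.fib (r + 2 + 1)) * a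
      - Nat.fib (r + 2 + 1) * (a + i - 1) < Nat.fib (r + 2 + 1) := by linarith
  exact ⟨⟨lo, up⟩, by linarith, by linarith⟩
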